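/- arXiv:2003.05876 — 3 statements merged into one kernel-verified Lean document; each statement's English description precedes it below -/
import Mathlib

section
/- For every integer N ≥ 1, every complex number z and every complex number w with w² = 1 − z², the characteristic polynomial of H_BH(z) equals ∏_{k=0}^{N−1} (X − (N−1−2k)·w); i.e. the eigenvalues of the Bose–Hubbard Hamiltonian are (N−1−2k)·w, k = 0,…,N−1. -/
/-!
For polynomials `q` and `s`, consider the operator `f ↦ q f' + s f` on polynomials of degree `< N`
(assuming that it preserves them). If `q` vanishes at `r`, then it maps `(x - r) ^ k` to a multiple
of `(x - r) ^ k` whose cofactor takes the value `k q'(r) + s(r)` at `r`. So it is triangular in the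
basis of powers of `x - r`, and its eigenvalues are `k q'(r) + s(r)` for `k < N`.

The Hamiltonian `H_BH(z)` is the matrix of such an operator, with `q = 1 + 2 i z x - x²` and
`s = (N - 1) (x - i z)`, in the basis `√(binom(N - 1, k)) x ^ k`. The roots of `q` are `i z + w`
with `w² = 1 - z²`; at such a root `q' = -2 w` and `s = (N - 1) w`. Triangularity, unlike
diagonalizability, survives at the exceptional points `w = 0`, where the two roots coincide.
-/

open Matrix Polynomial Finset

/-- off-diagonal coupling `√((N−1−k)(k+1))`. -/
noncomputable def gCoup (N k : ℕ) : ℝ := Real.sqrt (((N - 1 - k) * (k + 1) : ℕ))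

/-- the non-Hermitian Bose–Hubbard Hamiltonian `H_BH(z)`. -/
noncomputable def HBH (N : ℕ) (z : ℂ) : Matrix (Fin N) (Fin N) ℂ :=
  fun k l =>
    if (k : ℕ) = (l : ℕ) then -Complex.I * (((N : ℤ) - 1 - 2 * (k : ℕ) : ℤ) : ℂ) * z
    else if (l : ℕ) = (k : ℕ) + 1 then (gCoup N k : ℂ)
    else if (k : ℕ) = (l : ℕ) + 1 then (gCoup N l : ℂ)
    else 0

/-- the EP limit of the discrete anharmonic-oscillator Hamiltonian `H_AO`. -/
noncomputable def HAO (N : ℕ) : Matrix (Fin N) (Fin N) ℂ :=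
  fun k l =>
    if (k : ℕ) = (l : ℕ) then -(((N : ℤ) - 1 - 2 * (k : ℕ) : ℤ) : ℂ)
    else if (l : ℕ) = (k : ℕ) + 1 then (gCoup N k : ℂ)
    else if (k : ℕ) = (l : ℕ) + 1 then -(gCoup N l : ℂ)
    else 0

/-- the nilpotent Jordan block `J`. -/
noncomputable def Jmat (N : ℕ) : Matrix (Fin N) (Fin N) ℂ :=
  fun k l => if (l : ℕ) = (k : ℕ) + 1 then 1 else 0

/-- the Pascal-triangle matrix `P`. -/
noncomputable def Pmat (N : ℕ) : Matrix (Fin N) (Fin N) ℂ :=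
  fun m q => ((N - 1 - (m : ℕ)).choose (q : ℕ) : ℂ)

/-- the diagonal factor `D` with `D_{k,k} = i^k·√(binom(N−1,k))`. -/
noncomputable def Dmat (N : ℕ) : Matrix (Fin N) (Fin N) ℂ :=
  Matrix.diagonal fun k => Complex.I ^ (k : ℕ) * (Real.sqrt ((N - 1).choose (k : ℕ)) : ℂ)

/-- the diagonal factor `G` with `G_{k,k} = (−i)^{N−1−k}·(N−1−k)!`. -/
noncomputable def Gmat (N : ℕ) : Matrix (Fin N) (Fin N) ℂ :=
  Matrix.diagonal fun k => (-Complex.I) ^ (N - 1 - (k : ℕ)) * ((N - 1 - (k : ℕ)).factorial : ℂ)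

/-- the Bose–Hubbard transition matrix `Q_BH = D·P·G`. -/
noncomputable def QBH (N : ℕ) : Matrix (Fin N) (Fin N) ℂ := Dmat N * Pmat N * Gmat N

/-- the diagonal factor `C` with `C_{k,k} = √(binom(N−1,k))`. -/
noncomputable def Cmat (N : ℕ) : Matrix (Fin N) (Fin N) ℂ :=
  Matrix.diagonal fun k => (Real.sqrt ((N - 1).choose (k : ℕ)) : ℂ)

/-- the diagonal factor `F` with `F_{k,k} = (−1)^{N−1−k}·(N−1−k)!`. -/
noncomputable def Fmat (N : ℕ) : Matrix (Fin N) (Fin N) ℂ :=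
  Matrix.diagonal fun k => (-1 : ℂ) ^ (N - 1 - (k : ℕ)) * ((N - 1 - (k : ℕ)).factorial : ℂ)

/-- the anharmonic-oscillator transition matrix `Q_AO = C·P·F`. -/
noncomputable def QAO (N : ℕ) : Matrix (Fin N) (Fin N) ℂ := Cmat N * Pmat N * Fmat N

/-- `β = −1 + i`. -/
noncomputable def betaC : ℂ := -1 + Complex.I

/-- the diagonal factor `B` with `B_{k,k} = (−β)^{−k}`. -/
noncomputable def Bmat (N : ℕ) : Matrix (Fin N) (Fin N) ℂ :=
  Matrix.diagonal fun k => ((-betaC) ^ (k : ℕ))⁻¹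

/-- the diagonal factor `A` with `A_{k,k} = β^k`. -/
noncomputable def Amat (N : ℕ) : Matrix (Fin N) (Fin N) ℂ :=
  Matrix.diagonal fun k => betaC ^ (k : ℕ)

/-- the upper-triangular real matrix `R` with
`R_{n,n+q} = √(binom(n+q,n)·binom(N−1−n,q))`. -/
noncomputable def Rmat (N : ℕ) : Matrix (Fin N) (Fin N) ℂ :=
  fun n k =>
    if (n : ℕ) ≤ (k : ℕ) then
      (Real.sqrt (((k : ℕ).choose (n : ℕ)) * ((N - 1 - (n : ℕ)).choose ((k : ℕ) - (n : ℕ)))) : ℂ)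
    else 0

/-- the transition-matrix product `S = B·R·A`. -/
noncomputable def Smat (N : ℕ) : Matrix (Fin N) (Fin N) ℂ := Bmat N * Rmat N * Amat N

/-- the discrete anharmonic-oscillator Hamiltonian `H_AO(γ)` with coupling parameter `γ`. -/
noncomputable def HAOg (N : ℕ) (γ : ℝ) : Matrix (Fin N) (Fin N) ℝ :=
  fun k l =>
    if (k : ℕ) = (l : ℕ) then -((N : ℝ) - 1 - 2 * (k : ℕ))
    else if (l : ℕ) = (k : ℕ) + 1 then
      Real.sqrt ((((N - 1 - (k : ℕ)) * ((k : ℕ) + 1) : ℕ)) * (1 - γ))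
    else if (k : ℕ) = (l : ℕ) + 1 then
      -Real.sqrt ((((N - 1 - (l : ℕ)) * ((l : ℕ) + 1) : ℕ)) * (1 - γ))
    else 0

/-- the exchange (parity) matrix `Π`. -/
noncomputable def PiMat (N : ℕ) : Matrix (Fin N) (Fin N) ℂ :=
  fun k l => if (k : ℕ) + (l : ℕ) = N - 1 then 1 else 0

lemma charpoly_of_isLowerTriangular {R n : Type*} [CommRing R] [Fintype n] [LinearOrder n]
    (A : Matrix n n R) (h : A.IsLowerTriangular) : A.charpoly = ∏ i, (X - C (A i i)) := by
  simp [Matrix.charpoly, det_of_isLowerTriangular _ h.charmatrix]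

lemma mul_toMatrix_unitsSMul {R M ι : Type*} [CommRing R] [AddCommGroup M] [Module R M] [Fintype ι]
    [DecidableEq ι] (b : Module.Basis ι R M) (u : ι → Rˣ) (f : Module.End R M) (i j : ι) :
    u i * LinearMap.toMatrix (b.unitsSMul u) (b.unitsSMul u) f i j =
      LinearMap.toMatrix b b f i j * u j := by
  simp only [LinearMap.toMatrix_apply, Module.Basis.repr_unitsSMul, Module.Basis.unitsSMul_apply,
    Units.smul_def, map_smul, Finsupp.smul_apply, smul_eq_mul]
  rw [mul_left_comm, Units.mul_inv_cancel_left, mul_comm]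

section FirstOrderOperators

variable {R : Type*} [CommRing R]

/-- The first-order differential operator `f ↦ q f' + s f` on polynomials. -/
noncomputable def firstOrderOp (q s : R[X]) : R[X] →ₗ[R] R[X] :=
  LinearMap.mulLeft R q ∘ₗ derivative + LinearMap.mulLeft R s

lemma firstOrderOp_apply (q s f : R[X]) :
    firstOrderOp q s f = q * derivative f + s * f := rfl

lemma derivative_taylor (r : R) (f : R[X]) :
    derivative (taylor r f) = taylor r (derivative f) := by
  simp [taylor_apply, derivative_comp]

lemma taylor_firstOrderOp (r : R) (q s f : R[X]) :
    taylor r (firstOrderOp q s f) = firstOrderOp (taylor r q) (taylor r s) (taylor r f) := by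
  simp only [firstOrderOp_apply, map_add, taylor_mul, derivative_taylor]

lemma firstOrderOp_X_mul_X_pow (p s : R[X]) (n : ℕ) :
    firstOrderOp (X * p) s (X ^ n) = ((n : R[X]) * p + s) * X ^ n := by
  cases n with
  | zero => simp [firstOrderOp_apply]
  | succ n =>
    simp only [firstOrderOp_apply, derivative_X_pow_succ, map_add, map_natCast, map_one]
    push_cast
    ring

lemma firstOrderOp_quadratic_X_pow (α β γ δ ε : R) (n : ℕ) :
    firstOrderOp (C α + C β * X + C γ * X ^ 2) (C δ + C ε * X) (X ^ n) =
      C (n * α) * X ^ (n - 1) + C (n * β + δ) * X ^ n + C (n * γ + ε) * X ^ (n + 1) := by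
  cases n with
  | zero => simp [firstOrderOp_apply]
  | succ n =>
    simp only [firstOrderOp_apply, derivative_X_pow_succ, map_add, map_mul, map_natCast, map_one,
      Nat.add_sub_cancel]
    push_cast
    ring

lemma coeff_firstOrderOp_quadratic_X_pow (α β γ δ ε : R) (n k : ℕ) :
    (firstOrderOp (C α + C β * X + C γ * X ^ 2) (C δ + C ε * X) (X ^ n)).coeff k =
      if k = n then n * β + δ
      else if n = k + 1 then n * α
      else if k = n + 1 then n * γ + ε
      else 0 := by
  rw [firstOrderOp_quadratic_X_pow]
  simp only [coeff_add, coeff_C_mul_X_pow]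
  rcases n with _ | n
  · split_ifs <;> simp_all
  · rw [Nat.add_sub_cancel]
    split_ifs <;> first | omega | simp

lemma firstOrderOp_quadratic_mem_degreeLT {N : ℕ} {α β γ δ ε : R} (hε : (N - 1) * γ + ε = 0) :
    ∀ f ∈ degreeLT R N,
      firstOrderOp (C α + C β * X + C γ * X ^ 2) (C δ + C ε * X) f ∈ degreeLT R N := by
  classical
  suffices degreeLT R N ≤ (degreeLT R N).comap
      (firstOrderOp (C α + C β * X + C γ * X ^ 2) (C δ + C ε * X)) from this
  nth_rw 1 [degreeLT_eq_span_X_pow]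
  rw [Submodule.span_le, coe_image, Set.image_subset_iff]
  intro n hn
  have hnN : n < N := by simpa using hn
  have monomial_mem (c : R) {k : ℕ} (hk : k < N) : C c * X ^ k ∈ degreeLT R N := by
    rw [C_mul_X_pow_eq_monomial]
    exact monomial_coe_mem_degreeLT (⟨k, hk⟩ : Fin N) c
  have top_mem : C (n * γ + ε) * X ^ (n + 1) ∈ degreeLT R N := by
    obtain hlt | rfl := (Nat.succ_le_of_lt hnN).lt_or_eq
    · exact monomial_mem _ hlt
    · have htop : (n : R) * γ + ε = 0 := by simpa using hε
      simp [htop]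
  simp only [Set.mem_preimage, SetLike.mem_coe, Submodule.mem_comap, firstOrderOp_quadratic_X_pow]
  exact add_mem (add_mem (monomial_mem _ (by omega)) (monomial_mem _ hnN)) top_mem

lemma X_dvd_taylor {q : R[X]} {r : R} (hr : q.IsRoot r) : X ∣ taylor r q := by
  rwa [X_dvd_iff, taylor_coeff_zero]

/-- The basis `(X - r) ^ k` of the polynomials of degree `< N`. -/
noncomputable def taylorBasis (r : R) (N : ℕ) : Module.Basis (Fin N) R (degreeLT R N) :=
  (degreeLT.basis R N).map (taylorLinearEquiv (-r) N)

lemma coe_taylorBasis (r : R) {N : ℕ} (i : Fin N) :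
    (taylorBasis r N i : R[X]) = taylor (-r) (X ^ (i : ℕ)) := by
  rw [taylorBasis, Module.Basis.map_apply, ← degreeLT.basis_val]
  rfl

lemma taylorBasis_repr (r : R) {N : ℕ} (f : degreeLT R N) (i : Fin N) :
    (taylorBasis r N).repr f i = (taylor r (f : R[X])).coeff i := by
  rw [taylorBasis, Module.Basis.map_repr, LinearEquiv.trans_apply, taylorLinearEquiv_symm, neg_neg,
    degreeLT.basis_repr]
  rfl

section Restrict

variable {N : ℕ} {q s : R[X]} (h : ∀ f ∈ degreeLT R N, firstOrderOp q s f ∈ degreeLT R N)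
include h

lemma toMatrix_taylorBasis_firstOrderOp {p : R[X]} {r : R} (hp : taylor r q = X * p)
    (i j : Fin N) :
    LinearMap.toMatrix (taylorBasis r N) (taylorBasis r N) ((firstOrderOp q s).restrict h) i j =
      ((((j : ℕ) : R[X]) * p + taylor r s) * X ^ (j : ℕ)).coeff i := by
  rw [LinearMap.toMatrix_apply, taylorBasis_repr, LinearMap.coe_restrict_apply, coe_taylorBasis,
    taylor_firstOrderOp, taylor_taylor, add_neg_cancel, taylor_zero, hp, firstOrderOp_X_mul_X_pow]

lemma isLowerTriangular_toMatrix_firstOrderOp {r : R} (hr : q.IsRoot r) :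
    (LinearMap.toMatrix (taylorBasis r N) (taylorBasis r N)
      ((firstOrderOp q s).restrict h)).IsLowerTriangular := by
  obtain ⟨p, hp⟩ := X_dvd_taylor hr
  intro i j (hij : i < j)
  rw [toMatrix_taylorBasis_firstOrderOp h hp, coeff_mul_X_pow', if_neg (by simpa using hij)]

lemma toMatrix_firstOrderOp_self {r : R} (hr : q.IsRoot r) (i : Fin N) :
    LinearMap.toMatrix (taylorBasis r N) (taylorBasis r N) ((firstOrderOp q s).restrict h) i i =
      (i : ℕ) * (derivative q).eval r + s.eval r := by
  obtain ⟨p, hp⟩ := X_dvd_taylor hr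
  rw [toMatrix_taylorBasis_firstOrderOp h hp, coeff_mul_X_pow', if_pos le_rfl, Nat.sub_self,
    coeff_add, coeff_natCast_mul, taylor_coeff_zero, ← taylor_coeff_one, hp, coeff_X_mul]

theorem charpoly_restrict_firstOrderOp {r : R} (hr : q.IsRoot r) :
    ((firstOrderOp q s).restrict h).charpoly =
      ∏ k ∈ range N, (X - C (k * (derivative q).eval r + s.eval r)) := by
  rw [← LinearMap.charpoly_toMatrix _ (taylorBasis r N),
    charpoly_of_isLowerTriangular _ (isLowerTriangular_toMatrix_firstOrderOp h hr),
    ← Fin.prod_univ_eq_prod_range]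
  simp only [toMatrix_firstOrderOp_self h hr]

end Restrict

end FirstOrderOperators

section BoseHubbard

lemma sqrt_mul_sqrt_mul_of_mul_eq {a b c d : ℝ} (ha : 0 ≤ a) (hd : 0 ≤ d) (h : a * c = b * d) :
    √a * √(c * d) = d * √b := by
  rw [← Real.sqrt_mul ha, ← mul_assoc, h, mul_assoc, Real.sqrt_mul' b (mul_self_nonneg d),
    Real.sqrt_mul_self hd, mul_comm]

lemma sqrt_choose_mul_gCoup (N k : ℕ) :
    √((N - 1).choose k) * gCoup N k = (k + 1 : ℕ) * √((N - 1).choose (k + 1)) := by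
  rw [gCoup, Nat.cast_mul]
  apply sqrt_mul_sqrt_mul_of_mul_eq (Nat.cast_nonneg _) (Nat.cast_nonneg _)
  exact_mod_cast (Nat.choose_succ_right_eq (N - 1) k).symm

lemma sqrt_choose_succ_mul_gCoup (N k : ℕ) :
    √((N - 1).choose (k + 1)) * gCoup N k = (N - 1 - k : ℕ) * √((N - 1).choose k) := by
  rw [gCoup, Nat.cast_mul, mul_comm ((N - 1 - k : ℕ) : ℝ)]
  apply sqrt_mul_sqrt_mul_of_mul_eq (Nat.cast_nonneg _) (Nat.cast_nonneg _)
  exact_mod_cast Nat.choose_succ_right_eq (N - 1) k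

lemma sqrt_choose_ne_zero {N : ℕ} (k : Fin N) : (√((N - 1).choose k) : ℂ) ≠ 0 := by
  have : 0 < (N - 1).choose k := Nat.choose_pos (by omega)
  rw [Complex.ofReal_ne_zero]
  positivity

/-- The basis `√(binom(N - 1, k)) X ^ k` of the polynomials of degree `< N`. -/
noncomputable def binomialBasis (N : ℕ) : Module.Basis (Fin N) ℂ (degreeLT ℂ N) :=
  (degreeLT.basis ℂ N).unitsSMul fun k => Units.mk0 _ (sqrt_choose_ne_zero k)

lemma sqrt_choose_mul_toMatrix_binomialBasis {N : ℕ} (f : Module.End ℂ (degreeLT ℂ N))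
    (k l : Fin N) :
    √((N - 1).choose k) * LinearMap.toMatrix (binomialBasis N) (binomialBasis N) f k l =
      LinearMap.toMatrix (degreeLT.basis ℂ N) (degreeLT.basis ℂ N) f k l * √((N - 1).choose l) :=
  mul_toMatrix_unitsSMul (degreeLT.basis ℂ N) (fun k => Units.mk0 _ (sqrt_choose_ne_zero k)) f k l

/-- The Bose–Hubbard Hamiltonian as the operator
`f ↦ (1 + 2 i z X - X²) f' + (N - 1) (X - i z) f` on polynomials of degree `< N`. Its coefficients
are spelled out in the form required by `firstOrderOp_quadratic_mem_degreeLT`. -/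
noncomputable def boseHubbardOp (N : ℕ) (z : ℂ) : Module.End ℂ (degreeLT ℂ N) :=
  (firstOrderOp (C 1 + C (2 * Complex.I * z) * X + C (-1) * X ^ 2)
    (C (-(N - 1) * (Complex.I * z)) + C ((N : ℂ) - 1) * X)).restrict
    (firstOrderOp_quadratic_mem_degreeLT (by ring))

lemma toMatrix_degreeLT_basis_boseHubbardOp (N : ℕ) (z : ℂ) (k l : Fin N) :
    LinearMap.toMatrix (degreeLT.basis ℂ N) (degreeLT.basis ℂ N) (boseHubbardOp N z) k l =
      if (k : ℕ) = l then -Complex.I * (N - 1 - 2 * (k : ℕ)) * z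
      else if (l : ℕ) = k + 1 then (k + 1 : ℕ)
      else if (k : ℕ) = l + 1 then (N - 1 - l : ℕ)
      else 0 := by
  rw [LinearMap.toMatrix_apply, degreeLT.basis_repr, boseHubbardOp, LinearMap.coe_restrict_apply,
    degreeLT.basis_val, coeff_firstOrderOp_quadratic_X_pow]
  split_ifs with hdiag hupper hlower
  · rw [hdiag]
    ring
  · rw [hupper, mul_one]
  · rw [Nat.cast_sub (by omega), Nat.cast_sub (by omega), Nat.cast_one]
    ring
  · rfl

lemma toMatrix_binomialBasis_boseHubbardOp (N : ℕ) (z : ℂ) :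
    LinearMap.toMatrix (binomialBasis N) (binomialBasis N) (boseHubbardOp N z) = HBH N z := by
  ext k l
  apply mul_left_cancel₀ (sqrt_choose_ne_zero k)
  rw [sqrt_choose_mul_toMatrix_binomialBasis, toMatrix_degreeLT_basis_boseHubbardOp, HBH]
  split_ifs with hdiag hupper hlower
  · rw [hdiag]
    push_cast
    ring
  · rw [hupper]
    exact_mod_cast (sqrt_choose_mul_gCoup N k).symm
  · rw [hlower]
    exact_mod_cast (sqrt_choose_succ_mul_gCoup N l).symm
  · rw [mul_zero, zero_mul]

lemma charpoly_boseHubbardOp (N : ℕ) {z w : ℂ} (hw : w ^ 2 = 1 - z ^ 2) :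
    (boseHubbardOp N z).charpoly =
      ∏ k ∈ range N, (X - C ((((N : ℤ) - 1 - 2 * k : ℤ) : ℂ) * w)) := by
  have hroot : (C 1 + C (2 * Complex.I * z) * X + C (-1) * X ^ 2).IsRoot (Complex.I * z + w) := by
    simp only [IsRoot.def, eval_add, eval_mul, eval_pow, eval_C, eval_X]
    linear_combination z ^ 2 * Complex.I_sq - hw
  rw [boseHubbardOp, charpoly_restrict_firstOrderOp _ hroot]
  refine prod_congr rfl fun k _ => ?_
  have hderiv : (derivative (C 1 + C (2 * Complex.I * z) * X + C (-1) * X ^ 2)).eval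
      (Complex.I * z + w) = -2 * w := by
    simp only [derivative_add, derivative_C, derivative_C_mul, derivative_X, derivative_X_sq,
      eval_add, eval_mul, eval_C, eval_X, eval_one, eval_zero]
    ring
  have hs : (C (-(N - 1) * (Complex.I * z)) + C ((N : ℂ) - 1) * X).eval (Complex.I * z + w) =
      (N - 1) * w := by
    simp only [eval_add, eval_mul, eval_C, eval_X]
    ring
  rw [hderiv, hs]
  congr 2
  push_cast
  ring

end BoseHubbard

/-- the characteristic polynomial of `H_BH(z)` is
`∏_{k=0}^{N−1} (X − (N−1−2k)·w)` whenever `w² = 1 − z²`. -/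
theorem bh_charpoly (N : ℕ) (hN : 1 ≤ N) (z w : ℂ) (hw : w ^ 2 = 1 - z ^ 2) :
    (HBH N z).charpoly =
      ∏ k ∈ Finset.range N, (X - C ((((N : ℤ) - 1 - 2 * k : ℤ) : ℂ) * w)) := by
  rw [← toMatrix_binomialBasis_boseHubbardOp, LinearMap.charpoly_toMatrix,
    charpoly_boseHubbardOp N hw]
end

section
/- For every integer N ≥ 1 and every real γ with 0 ≤ γ ≤ 1, the characteristic polynomial of the parametrized anharmonic-oscillator Hamiltonian H_AO(γ) equals ∏_{k=0}^{N−1} (X − (N−1−2k)·√γ); in particular all eigenvalues of H_AO(γ) are real, they are simple for 0 < γ ≤ 1 and N ≥ 2, and they all collapse to 0 at the exceptional point γ = 0. -/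
/-!
Conjugating `H_AO(γ)`, of size `n + 1`, by the diagonal matrix with entries `√(n.choose k)` gives
the matrix, in the monomial basis, of the action of `!![1, -r; r, -1]` on binary forms of degree
`n`, where `r = √(1 - γ)`. The eigenvalues of this `2 × 2` matrix are `±√γ`, so those of its `n`-th
symmetric power are `(i - j) √γ` with `i + j = n`. To see this without diagonalising, which is
impossible at `γ = 0`, dehomogenise the forms to polynomials of degree at most `n`: a translation
`x ↦ x + t` conjugates the action of `!![a, b; c, d]` into that of
`!![a - b t, b; c + (a - d) t - b t², d + b t]`, which is upper triangular for a suitable `t`.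
-/

open Matrix Polynomial Finset

section BinaryForm

variable {R : Type*} [CommRing R] (n : ℕ) (a b c d : R)

/-- The infinitesimal action of the matrix `!![a, b; c, d]` on binary forms of degree `n`, that is,
the derivation `(a x + c y) ∂/∂x + (b x + d y) ∂/∂y`, written on the dehomogenised forms `y = 1`,
where Euler's identity turns `∂/∂y` into `n - x ∂/∂x`. -/
noncomputable def binaryFormOp : R[X] →ₗ[R] R[X] :=
  LinearMap.mulLeft R (C c + C (a - d) * X - C b * X ^ 2) ∘ₗ derivative +
    LinearMap.mulLeft R (C (n : R) * (C d + C b * X))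

lemma binaryFormOp_apply (p : R[X]) :
    binaryFormOp n a b c d p =
      (C c + C (a - d) * X - C b * X ^ 2) * derivative p + C (n : R) * (C d + C b * X) * p :=
  rfl

lemma coeff_binaryFormOp (p : R[X]) (j : ℕ) :
    (binaryFormOp n a b c d p).coeff j =
      (j + 1) * c * p.coeff (j + 1) + (j * a + (n - j) * d) * p.coeff j +
        (n + 1 - j) * b * (X * p).coeff j := by
  have expand : binaryFormOp n a b c d p =
      C c * derivative p + C (a - d) * (X * derivative p) - C b * (X * (X * derivative p)) +
        (C (n * d) * p + C (n * b) * (X * p)) := by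
    rw [binaryFormOp_apply, C_mul, C_mul]
    ring
  rw [expand]
  rcases j with _ | _ | j <;>
    simp only [coeff_add, coeff_sub, coeff_C_mul, coeff_X_mul, coeff_X_mul_zero,
      coeff_derivative] <;> push_cast <;> ring

lemma binaryFormOp_mem_degreeLT {p : R[X]} (hp : p ∈ R[X]_(n + 1)) :
    binaryFormOp n a b c d p ∈ R[X]_(n + 1) := by
  rw [mem_degreeLT, degree_lt_iff_coeff_zero] at hp ⊢
  intro j hj
  obtain ⟨j, rfl⟩ : ∃ i, j = i + 1 := ⟨j - 1, by omega⟩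
  rw [coeff_binaryFormOp, coeff_X_mul, hp (j + 1) hj, hp (j + 1 + 1) (by omega)]
  obtain rfl | hj : j = n ∨ n + 1 ≤ j := by omega
  · push_cast
    ring
  · rw [hp j hj]
    ring

/-- The restriction of `binaryFormOp` to the polynomials of degree at most `n`, i.e. the `n`-th
symmetric power representation of `!![a, b; c, d]`. -/
noncomputable def binaryFormEnd : Module.End R R[X]_(n + 1) :=
  (binaryFormOp n a b c d).restrict fun _ ↦ binaryFormOp_mem_degreeLT n a b c d

lemma toMatrix_binaryFormEnd_apply (j k : Fin (n + 1)) :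
    LinearMap.toMatrix (degreeLT.basis R (n + 1)) (degreeLT.basis R (n + 1))
        (binaryFormEnd n a b c d) j k =
      if (j : ℕ) = k then (j * a + (n - j) * d : R)
      else if (k : ℕ) = j + 1 then (j + 1) * c
      else if (j : ℕ) = k + 1 then (n - k) * b
      else 0 := by
  rw [LinearMap.toMatrix_apply, degreeLT.basis_repr, binaryFormEnd, LinearMap.coe_restrict_apply,
    degreeLT.basis_val, coeff_binaryFormOp, ← pow_succ', coeff_X_pow, coeff_X_pow, coeff_X_pow]
  split_ifs <;> first | omega | simp_all

variable {n a b c d}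

lemma taylor_binaryFormOp (t : R) (p : R[X]) :
    taylor t (binaryFormOp n a b c d p) =
      binaryFormOp n (a - b * t) b (c + (a - d) * t - b * t ^ 2) (d + b * t) (taylor t p) := by
  have taylor_derivative : taylor t (derivative p) = derivative (taylor t p) := by
    simp [taylor_apply, derivative_comp]
  simp only [binaryFormOp_apply, map_add, map_sub, taylor_mul, taylor_pow, taylor_C, taylor_X,
    taylor_derivative, C_mul, C_pow]
  ring

lemma taylorLinearEquiv_conj_binaryFormEnd (t : R) :
    (taylorLinearEquiv t (n + 1)).conj (binaryFormEnd n a b c d) =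
      binaryFormEnd n (a - b * t) b (c + (a - d) * t - b * t ^ 2) (d + b * t) := by
  rw [LinearEquiv.conj_apply, LinearEquiv.comp_toLinearMap_symm_eq]
  exact LinearMap.ext fun p ↦ Subtype.ext (taylor_binaryFormOp t p)

lemma charpoly_binaryFormEnd_upperTriangular :
    (binaryFormEnd n a b 0 d).charpoly =
      ∏ ij ∈ antidiagonal n, (X - C (ij.1 * a + ij.2 * d)) := by
  rw [← LinearMap.charpoly_toMatrix _ (degreeLT.basis R (n + 1)), ← Matrix.charpoly_transpose,
    Matrix.charpoly_of_isUpperTriangular]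
  · rw [Finset.Nat.prod_antidiagonal_eq_prod_range_succ_mk, ← Fin.prod_univ_eq_prod_range]
    refine Fintype.prod_congr _ _ fun k ↦ ?_
    rw [Matrix.transpose_apply, toMatrix_binaryFormEnd_apply, if_pos rfl, Nat.cast_sub (by omega)]
  · intro j k (hkj : (k : ℕ) < j)
    rw [Matrix.transpose_apply, toMatrix_binaryFormEnd_apply, if_neg (by omega), mul_zero,
      if_neg (c := (k : ℕ) = j + 1) (by omega), ite_self]

/-- `ht` says that `(t, 1)` is a left eigenvector of `!![a, b; c, d]`, with eigenvalue `d + b * t`;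
the other eigenvalue is then `a - b * t` by the trace. -/
lemma charpoly_binaryFormEnd_of_root {t : R} (ht : c + (a - d) * t - b * t ^ 2 = 0) :
    (binaryFormEnd n a b c d).charpoly =
      ∏ ij ∈ antidiagonal n, (X - C (ij.1 * (a - b * t) + ij.2 * (d + b * t))) := by
  rw [← (taylorLinearEquiv t (n + 1)).charpoly_conj, taylorLinearEquiv_conj_binaryFormEnd, ht,
    charpoly_binaryFormEnd_upperTriangular]

end BinaryForm

lemma charpoly_eq_of_mul_eq_mul {ι R : Type*} [Fintype ι] [DecidableEq ι] [CommRing R]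
    {A B T : Matrix ι ι R} (hT : IsUnit T) (h : T * A = B * T) : A.charpoly = B.charpoly := by
  obtain ⟨u, rfl⟩ := hT
  rw [← Matrix.charpoly_units_conj u A, h, ← Matrix.coe_units_inv, Units.mul_inv_cancel_right]

lemma sqrt_choose_mul_sqrt (n k : ℕ) :
    √(n.choose k : ℝ) * √((n - k) * (k + 1) : ℕ) = (k + 1) * √(n.choose (k + 1) : ℝ) := by
  have h : n.choose k * ((n - k) * (k + 1)) = (k + 1) ^ 2 * n.choose (k + 1) := by
    linear_combination (k + 1) * (n.choose_succ_right_eq k).symm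
  rw [← Real.sqrt_mul (by positivity), ← Nat.cast_mul, h, Nat.cast_mul,
    Real.sqrt_mul (by positivity), Nat.cast_pow, Real.sqrt_sq (by positivity), Nat.cast_succ]

lemma sqrt_choose_succ_mul_sqrt (n k : ℕ) :
    √(n.choose (k + 1) : ℝ) * √((n - k) * (k + 1) : ℕ) = (n - k : ℕ) * √(n.choose k : ℝ) := by
  have h : n.choose (k + 1) * ((n - k) * (k + 1)) = (n - k) ^ 2 * n.choose k := by
    linear_combination (n - k) * n.choose_succ_right_eq k
  rw [← Real.sqrt_mul (by positivity), ← Nat.cast_mul, h, Nat.cast_mul,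
    Real.sqrt_mul (by positivity), Nat.cast_pow, Real.sqrt_sq (by positivity)]

lemma isUnit_diagonal_sqrt_choose (n : ℕ) :
    IsUnit (Matrix.diagonal fun k : Fin (n + 1) ↦ √(n.choose k : ℝ)) := by
  refine Matrix.isUnit_diagonal.2 (Pi.isUnit_iff.2 fun k ↦ isUnit_iff_ne_zero.2 ?_)
  have : 0 < n.choose k := Nat.choose_pos (by omega)
  positivity

lemma diagonal_sqrt_choose_mul_HAOg (n : ℕ) (γ : ℝ) :
    Matrix.diagonal (fun k : Fin (n + 1) ↦ √(n.choose k : ℝ)) * HAOg (n + 1) γ =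
      LinearMap.toMatrix (degreeLT.basis ℝ (n + 1)) (degreeLT.basis ℝ (n + 1))
          (binaryFormEnd n 1 (-√(1 - γ)) √(1 - γ) (-1)) *
        Matrix.diagonal (fun k : Fin (n + 1) ↦ √(n.choose k : ℝ)) := by
  ext j k
  rw [Matrix.diagonal_mul, Matrix.mul_diagonal, toMatrix_binaryFormEnd_apply]
  simp only [HAOg, Nat.add_sub_cancel, Real.sqrt_mul (Nat.cast_nonneg _)]
  split_ifs with hdiag hsuper hsub
  · rw [hdiag]
    push_cast
    ring
  · rw [hsuper]
    linear_combination √(1 - γ) * sqrt_choose_mul_sqrt n j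
  · have hdown := sqrt_choose_succ_mul_sqrt n k
    rw [Nat.cast_sub (by omega)] at hdown
    rw [hsub]
    linear_combination -√(1 - γ) * hdown
  · simp

lemma charpoly_HAOg_succ (n : ℕ) {γ : ℝ} (h0 : 0 ≤ γ) (h1 : γ ≤ 1) :
    (HAOg (n + 1) γ).charpoly = ∏ ij ∈ antidiagonal n, (X - C ((ij.1 - ij.2) * √γ)) := by
  set r := √(1 - γ) with hr
  set s := √γ with hs
  -- The root `(s - 1) / r`, rewritten so as to cover `γ = 1`, where `r = 0`.
  set t := -r / (1 + s) with ht
  have circle : r ^ 2 + s ^ 2 = 1 := by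
    rw [hr, hs, Real.sq_sqrt (sub_nonneg.2 h1), Real.sq_sqrt h0, sub_add_cancel]
  have one_add_s_ne : 1 + s ≠ 0 := by positivity
  have eigenvalue : 1 + r * t = s := by
    rw [ht]
    field_simp
    linear_combination -circle
  have root : r + (1 - -1) * t - -r * t ^ 2 = 0 := by
    have hts : t * (1 + s) = -r := div_mul_cancel₀ _ one_add_s_ne
    linear_combination hts + t * eigenvalue
  rw [charpoly_eq_of_mul_eq_mul (isUnit_diagonal_sqrt_choose n) (diagonal_sqrt_choose_mul_HAOg n γ),
    LinearMap.charpoly_toMatrix, charpoly_binaryFormEnd_of_root root]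
  refine Finset.prod_congr rfl fun ij _ ↦ ?_
  congr 2
  linear_combination (ij.1 - ij.2 : ℝ) * eigenvalue

/-- the characteristic polynomial of `H_AO(γ)` is
`∏_{k=0}^{N−1} (X − (N−1−2k)·√γ)` for `0 ≤ γ ≤ 1`; the roots are simple for
`0 < γ ≤ 1`, `N ≥ 2`, and all collapse to `0` at `γ = 0`. -/
theorem ao_charpoly (N : ℕ) (hN : 1 ≤ N) (γ : ℝ) (h0 : 0 ≤ γ) (h1 : γ ≤ 1) :
    (HAOg N γ).charpoly =
        ∏ k ∈ Finset.range N, (X - C (((N : ℝ) - 1 - 2 * k) * Real.sqrt γ)) ∧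
      (0 < γ → 2 ≤ N →
        Function.Injective
          (fun k : Fin N => ((N : ℝ) - 1 - 2 * (k : ℕ)) * Real.sqrt γ)) ∧
      (γ = 0 → ∀ k : Fin N, ((N : ℝ) - 1 - 2 * (k : ℕ)) * Real.sqrt γ = 0) := by
  refine ⟨?_, fun hγ _ k l hkl ↦ ?_, ?_⟩
  · obtain ⟨n, rfl⟩ := Nat.exists_eq_add_of_le' hN
    rw [charpoly_HAOg_succ n h0 h1, ← Finset.Nat.prod_antidiagonal_swap,
      Finset.Nat.prod_antidiagonal_eq_prod_range_succ_mk]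
    refine Finset.prod_congr rfl fun k hk ↦ ?_
    rw [Prod.fst_swap, Prod.snd_swap, Nat.cast_sub (mem_range_succ_iff.1 hk)]
    congr 3
    push_cast
    ring
  · have h := mul_right_cancel₀ (Real.sqrt_pos.2 hγ).ne' hkl
    exact Fin.ext (Nat.cast_injective (R := ℝ) (by linarith))
  · rintro rfl k
    rw [Real.sqrt_zero, mul_zero]
end

section
/- For every integer N ≥ 1, the 'Jordan-block match' realization of the quantum phase transition of the third kind is continuous: the matrix-valued function 𝓗 : ℝ → Matrix(N,N,ℂ) defined piecewise by 𝓗(t) = Q_AO⁻¹ · H_AO(−t) · Q_AO for t ≤ 0 and 𝓗(t) = Q_BH⁻¹ · H_BH(1−t) · Q_BH for t > 0 is continuous on all of ℝ, and at the exceptional-point instant it satisfies 𝓗(0) = J; in particular lim_{t→0⁻} 𝓗(t) = lim_{t→0⁺} 𝓗(t) = J, i.e. the two sub-Hamiltonians are matched at t = 0 via the Jordan block. -/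
/-!
At the exceptional point both Hamiltonians have the form `H(c) = -c (n₁ - n₂) + K - c² Kᵀ`, with
`c = 1` for the anharmonic oscillator and `c = i` for the Bose–Hubbard model, and both transition
matrices have the form `Q(c) = S(c) P F(c)`. Here `n₁`, `n₂` are the occupation numbers
`N - 1 - k`, `k` of two bosonic modes and `K` is the hopping term. The diagonal factor `S(c)`
clears the square roots, `H(c) S(c) = c S(c) T` with `T = n₁ (J - 1) - n₂ (Jᵀ - 1)`.
The recurrences of the binomial coefficients say that `T P = -P n₁ J`, and the factorials in `F(c)`
absorb the remaining weights, `-c n₁ J F(c) = F(c) J`. Altogether `H(c) Q(c) = Q(c) J`. Since `P`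
with its rows reversed is unitriangular, `Q(c)` is invertible for `c ≠ 0`, so the two continuous
branches of `Hsys` both take the value `J` at `t = 0`.
-/

open Matrix Polynomial Finset

/-- the complexified anharmonic-oscillator Hamiltonian. -/
noncomputable def HAOc (N : ℕ) (γ : ℝ) : Matrix (Fin N) (Fin N) ℂ :=
  (HAOg N γ).map Complex.ofReal

/-- the piecewise 'Jordan-block match' Hamiltonian of the phase transition. -/
noncomputable def Hsys (N : ℕ) (t : ℝ) : Matrix (Fin N) (Fin N) ℂ :=
  if t ≤ 0 then (QAO N)⁻¹ * HAOc N (-t) * QAO N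
  else (QBH N)⁻¹ * HBH N (1 - (t : ℂ)) * QBH N

section JordanBlock

variable {N : ℕ} {ι : Type*}

lemma Jmat_mul_apply (A : Matrix (Fin N) ι ℂ) (i : Fin N) (j : ι) :
    (Jmat N * A) i j = if h : (i : ℕ) + 1 < N then A ⟨i + 1, h⟩ j else 0 := by
  simp only [mul_apply, Jmat, ite_mul, one_mul, zero_mul]
  split_ifs with h
  · have hx (x : Fin N) : (x : ℕ) = i + 1 ↔ x = ⟨i + 1, h⟩ := by simp [Fin.ext_iff]
    simp [hx]
  · exact sum_eq_zero fun x _ => if_neg (by omega)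

lemma mul_Jmat_apply (A : Matrix ι (Fin N) ℂ) (i : ι) (j : Fin N) :
    (A * Jmat N) i j = if (j : ℕ) = 0 then 0 else A i ⟨j - 1, by omega⟩ := by
  simp only [mul_apply, Jmat, mul_ite, mul_one, mul_zero]
  split_ifs with h
  · exact sum_eq_zero fun x _ => if_neg (by omega)
  · have hx (x : Fin N) : (j : ℕ) = x + 1 ↔ x = ⟨j - 1, by omega⟩ := by
      rw [Fin.ext_iff]
      grind
    simp [hx]

lemma transpose_Jmat_mul_apply (A : Matrix (Fin N) ι ℂ) (i : Fin N) (j : ι) :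
    ((Jmat N)ᵀ * A) i j = if (i : ℕ) = 0 then 0 else A ⟨i - 1, by omega⟩ j := by
  rw [← transpose_transpose A, ← transpose_mul, transpose_apply, mul_Jmat_apply]
  rfl

lemma diagonal_mul_Jmat {u v : Fin N → ℂ} (h : ∀ k l : Fin N, (l : ℕ) = k + 1 → u k = v l) :
    diagonal u * Jmat N = Jmat N * diagonal v := by
  ext k l
  by_cases hkl : (l : ℕ) = k + 1
  · simp [diagonal_mul, mul_diagonal, Jmat, hkl, h k l hkl]
  · simp [diagonal_mul, mul_diagonal, Jmat, hkl]

end JordanBlock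

/-- The occupation number `N - 1 - k` of the first of two bosonic modes sharing `N - 1`
particles. -/
noncomputable def firstModeNumber (N : ℕ) : Matrix (Fin N) (Fin N) ℂ :=
  diagonal fun k => ((N - 1 - (k : ℕ) : ℕ) : ℂ)

/-- The occupation number `k` of the second mode. -/
noncomputable def secondModeNumber (N : ℕ) : Matrix (Fin N) (Fin N) ℂ :=
  diagonal fun k => ((k : ℕ) : ℂ)

/-- The operator moving one particle from the second mode to the first; its transpose moves one
back. -/
noncomputable def hopping (N : ℕ) : Matrix (Fin N) (Fin N) ℂ :=
  diagonal (fun k : Fin N => (gCoup N k : ℂ)) * Jmat N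

/-- The exceptional-point Hamiltonian, of the anharmonic oscillator for `c = 1` and of the
Bose–Hubbard model for `c = i`. -/
noncomputable def epHamiltonian (N : ℕ) (c : ℂ) : Matrix (Fin N) (Fin N) ℂ :=
  -c • (firstModeNumber N - secondModeNumber N) + hopping N - c ^ 2 • (hopping N)ᵀ

/-- The matrix `T` for which `epHamiltonian N c * leftFactor N c = c • (leftFactor N c * T)`: it is
tridiagonal with integer entries, and its rows sum to zero. -/
noncomputable def integerHamiltonian (N : ℕ) : Matrix (Fin N) (Fin N) ℂ :=
  firstModeNumber N * (Jmat N - 1) - secondModeNumber N * ((Jmat N)ᵀ - 1)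

/-- The left diagonal factor of a transition matrix: `C` for `c = 1` and `D` for `c = i`. -/
noncomputable def leftFactor (N : ℕ) (c : ℂ) : Matrix (Fin N) (Fin N) ℂ :=
  diagonal fun k => c ^ (k : ℕ) * (√((N - 1).choose (k : ℕ)) : ℂ)

/-- The right diagonal factor of a transition matrix: `F` for `c = 1` and `G` for `c = i`. -/
noncomputable def rightFactor (N : ℕ) (c : ℂ) : Matrix (Fin N) (Fin N) ℂ :=
  diagonal fun k => (-c) ^ (N - 1 - (k : ℕ)) * ((N - 1 - (k : ℕ)).factorial : ℂ)

/-- The transition matrix from `epHamiltonian N c` to the Jordan block: `Q_AO` for `c = 1` and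
`Q_BH` for `c = i`. -/
noncomputable def epTransition (N : ℕ) (c : ℂ) : Matrix (Fin N) (Fin N) ℂ :=
  leftFactor N c * Pmat N * rightFactor N c

lemma firstModeNumber_add_secondModeNumber (N : ℕ) :
    firstModeNumber N + secondModeNumber N = ((N - 1 : ℕ) : ℂ) • 1 := by
  rw [firstModeNumber, secondModeNumber, diagonal_add, ← diagonal_one, ← diagonal_smul]
  congr 1
  ext k
  have hk : N - 1 - (k : ℕ) + k = N - 1 := by omega
  simpa using mod_cast hk

lemma firstModeNumber_sub_secondModeNumber (N : ℕ) :
    firstModeNumber N - secondModeNumber N =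
      diagonal fun k : Fin N => (((N : ℤ) - 1 - 2 * (k : ℕ) : ℤ) : ℂ) := by
  rw [firstModeNumber, secondModeNumber, diagonal_sub]
  congr 1
  ext k
  have hk : (N : ℤ) - 1 - 2 * (k : ℕ) = ((N - 1 - k : ℕ) : ℤ) - k := by omega
  simp [hk]

lemma HBH_eq (N : ℕ) (z : ℂ) :
    HBH N z = -(Complex.I * z) • (firstModeNumber N - secondModeNumber N)
      + hopping N + (hopping N)ᵀ := by
  ext k l
  rw [firstModeNumber_sub_secondModeNumber]
  simp only [HBH, hopping, Jmat, Matrix.add_apply, Matrix.smul_apply, transpose_apply, diagonal_mul,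
    diagonal_apply, Fin.ext_iff, smul_eq_mul]
  split_ifs <;> first | omega | (push_cast; ring)

lemma HAOc_eq (N : ℕ) (γ : ℝ) :
    HAOc N γ = -(firstModeNumber N - secondModeNumber N)
      + (√(1 - γ) : ℂ) • (hopping N - (hopping N)ᵀ) := by
  ext k l
  rw [firstModeNumber_sub_secondModeNumber]
  simp only [HAOc, HAOg, hopping, gCoup, Jmat, map_apply, Matrix.add_apply,
    Matrix.sub_apply, Matrix.neg_apply, Matrix.smul_apply, transpose_apply, diagonal_mul,
    diagonal_apply, Fin.ext_iff, smul_eq_mul]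
  rw [Real.sqrt_mul (Nat.cast_nonneg _), Real.sqrt_mul (Nat.cast_nonneg _)]
  split_ifs <;> first | omega | (push_cast; ring)

lemma HBH_one (N : ℕ) : HBH N 1 = epHamiltonian N Complex.I := by
  simp [HBH_eq, epHamiltonian]

lemma HAOc_zero (N : ℕ) : HAOc N 0 = epHamiltonian N 1 := by
  simp [HAOc_eq, epHamiltonian, add_sub_assoc]

lemma QBH_eq_epTransition (N : ℕ) : QBH N = epTransition N Complex.I := rfl

lemma QAO_eq_epTransition (N : ℕ) : QAO N = epTransition N 1 := by
  simp [QAO, Cmat, Fmat, epTransition, leftFactor, rightFactor]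

lemma sqrt_natCast_mul_sqrt_natCast {a b m n : ℕ} (h : a * b = m ^ 2 * n) :
    √(a : ℝ) * √(b : ℝ) = m * √(n : ℝ) := by
  rw [← Real.sqrt_mul (by positivity), ← Nat.cast_mul, h, Nat.cast_mul, Nat.cast_pow,
    Real.sqrt_mul (by positivity), Real.sqrt_sq (by positivity)]

lemma gCoup_mul_sqrt_choose_succ (N k : ℕ) :
    gCoup N k * √((N - 1).choose (k + 1)) = (N - 1 - k : ℕ) * √((N - 1).choose k) :=
  sqrt_natCast_mul_sqrt_natCast <| by
    linear_combination (N - 1 - k) * Nat.choose_succ_right_eq (N - 1) k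

lemma gCoup_mul_sqrt_choose (N k : ℕ) :
    gCoup N k * √((N - 1).choose k) = (k + 1 : ℕ) * √((N - 1).choose (k + 1)) :=
  sqrt_natCast_mul_sqrt_natCast <| by
    linear_combination (k + 1) * (Nat.choose_succ_right_eq (N - 1) k).symm

lemma hopping_mul_leftFactor (N : ℕ) (c : ℂ) :
    hopping N * leftFactor N c = c • (leftFactor N c * (firstModeNumber N * Jmat N)) := by
  let s (k : ℕ) : ℂ := c ^ k * (√((N - 1).choose k) : ℂ)
  have hJ : Jmat N * leftFactor N c = diagonal (fun k : Fin N => s (k + 1)) * Jmat N :=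
    (diagonal_mul_Jmat fun k l hkl => by rw [hkl]).symm
  have hs (k : ℕ) : (gCoup N k : ℂ) * s (k + 1) = c * (s k * ((N - 1 - k : ℕ) : ℂ)) := by
    have := congrArg Complex.ofReal (gCoup_mul_sqrt_choose_succ N k)
    push_cast at this
    linear_combination c ^ (k + 1) * this
  rw [hopping, Matrix.mul_assoc, hJ, ← Matrix.mul_assoc, ← Matrix.mul_assoc, ← Matrix.smul_mul,
    leftFactor, firstModeNumber, diagonal_mul_diagonal, diagonal_mul_diagonal, ← diagonal_smul]
  congr 2
  exact funext fun k => hs k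

lemma transpose_hopping_mul_leftFactor (N : ℕ) (c : ℂ) :
    c ^ 2 • ((hopping N)ᵀ * leftFactor N c)
      = c • (leftFactor N c * (secondModeNumber N * (Jmat N)ᵀ)) := by
  rw [← transpose_inj]
  simp only [hopping, leftFactor, secondModeNumber, transpose_smul, transpose_mul,
    transpose_transpose, diagonal_transpose]
  rw [← Matrix.mul_assoc, diagonal_mul_diagonal, Matrix.mul_assoc, diagonal_mul_diagonal,
    ← Matrix.smul_mul, ← Matrix.mul_smul, ← diagonal_smul, ← diagonal_smul]
  refine diagonal_mul_Jmat fun k l hkl => ?_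
  have := congrArg Complex.ofReal (gCoup_mul_sqrt_choose N k)
  simp only [Pi.smul_apply, smul_eq_mul, hkl]
  push_cast at this ⊢
  linear_combination c ^ (k + 2 : ℕ) * this

lemma epHamiltonian_mul_leftFactor (N : ℕ) (c : ℂ) :
    epHamiltonian N c * leftFactor N c = c • (leftFactor N c * integerHamiltonian N) := by
  have hcomm : (firstModeNumber N - secondModeNumber N) * leftFactor N c
      = leftFactor N c * (firstModeNumber N - secondModeNumber N) := by
    rw [firstModeNumber_sub_secondModeNumber]
    exact commute_diagonal _ _
  rw [epHamiltonian, integerHamiltonian, Matrix.sub_mul, Matrix.add_mul,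
    Matrix.smul_mul, Matrix.smul_mul, hcomm, hopping_mul_leftFactor,
    transpose_hopping_mul_leftFactor]
  simp only [Matrix.mul_sub, Matrix.mul_one, smul_sub, neg_smul]
  abel

lemma mul_choose_sub_one_add_mul_choose (a q : ℕ) :
    a * (a - 1).choose q + q * a.choose q = a * a.choose q := by
  rcases q with _ | q
  · simp
  rcases a with _ | a
  · simp
  have := Nat.add_one_mul_choose_eq a q
  rw [Nat.choose_succ_succ] at this ⊢
  rw [Nat.add_sub_cancel]
  linear_combination this.symm

lemma succ_mul_choose_succ_add_mul_choose (a q : ℕ) :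
    (q + 1) * a.choose (q + 1) + q * a.choose q = a * a.choose q := by
  have := Nat.add_one_mul_choose_eq a q
  rw [Nat.choose_succ_succ] at this
  linear_combination this.symm

lemma firstModeNumber_mul_Jmat_mul_Pmat (N : ℕ) :
    firstModeNumber N * (Jmat N * Pmat N)
      = firstModeNumber N * Pmat N - Pmat N * secondModeNumber N := by
  ext m q
  have h := congrArg (Nat.cast (R := ℂ)) (mul_choose_sub_one_add_mul_choose (N - 1 - m) q)
  simp only [firstModeNumber, secondModeNumber, Matrix.sub_apply, diagonal_mul, mul_diagonal,
    Jmat_mul_apply, Pmat]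
  split_ifs with hm
  · rw [← Nat.sub_sub]
    push_cast at h
    linear_combination h
  · have h0 : N - 1 - (m : ℕ) = 0 := by omega
    rw [h0] at h ⊢
    push_cast at h
    linear_combination h

lemma secondModeNumber_mul_transpose_Jmat_mul_Pmat (N : ℕ) :
    secondModeNumber N * ((Jmat N)ᵀ * Pmat N)
      = secondModeNumber N * (Pmat N + Pmat N * Jmat N) := by
  ext m q
  simp only [secondModeNumber, Matrix.add_apply, diagonal_mul, transpose_Jmat_mul_apply,
    mul_Jmat_apply, Pmat]
  split_ifs with hm hq hq
  · simp [hm]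
  · simp [hm]
  · simp [hq]
  · obtain ⟨p, hp⟩ := Nat.exists_eq_add_one_of_ne_zero hq
    have ha : N - 1 - ((m : ℕ) - 1) = N - 1 - m + 1 := by omega
    simp only [ha, hp, Nat.choose_succ_succ, Nat.add_sub_cancel]
    push_cast
    ring

lemma Pmat_mul_secondModeNumber (N : ℕ) :
    Pmat N * secondModeNumber N
      = firstModeNumber N * (Pmat N * Jmat N) - Pmat N * secondModeNumber N * Jmat N := by
  ext m q
  simp only [firstModeNumber, secondModeNumber, Matrix.sub_apply, diagonal_mul, mul_diagonal,
    mul_Jmat_apply, Pmat]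
  split_ifs with hq
  · simp [hq]
  · obtain ⟨p, hp⟩ := Nat.exists_eq_add_one_of_ne_zero hq
    have h := congrArg (Nat.cast (R := ℂ)) (succ_mul_choose_succ_add_mul_choose (N - 1 - m) p)
    simp only [hp, Nat.add_sub_cancel]
    push_cast at h ⊢
    linear_combination h

lemma integerHamiltonian_mul_Pmat (N : ℕ) :
    integerHamiltonian N * Pmat N = -(Pmat N * (firstModeNumber N * Jmat N)) := by
  have hcomm : (firstModeNumber N + secondModeNumber N) * (Pmat N * Jmat N)
      = Pmat N * (firstModeNumber N + secondModeNumber N) * Jmat N := by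
    simp [firstModeNumber_add_secondModeNumber]
  calc _ = firstModeNumber N * (Jmat N * Pmat N) - firstModeNumber N * Pmat N
        - (secondModeNumber N * ((Jmat N)ᵀ * Pmat N) - secondModeNumber N * Pmat N) := by
        rw [integerHamiltonian]
        noncomm_ring
    _ = -(Pmat N * secondModeNumber N) - secondModeNumber N * (Pmat N * Jmat N) := by
        rw [firstModeNumber_mul_Jmat_mul_Pmat, secondModeNumber_mul_transpose_Jmat_mul_Pmat]
        noncomm_ring
    _ = Pmat N * secondModeNumber N * Jmat N
        - (firstModeNumber N + secondModeNumber N) * (Pmat N * Jmat N) := by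
        nth_rewrite 1 [Pmat_mul_secondModeNumber]
        noncomm_ring
    _ = _ := by
        rw [hcomm]
        noncomm_ring

lemma rightFactor_mul_Jmat (N : ℕ) (c : ℂ) :
    rightFactor N c * Jmat N = -c • (firstModeNumber N * Jmat N * rightFactor N c) := by
  have hF : rightFactor N c * Jmat N = Jmat N * diagonal fun l : Fin N =>
      (-c * (N - l : ℕ)) * ((-c) ^ (N - 1 - (l : ℕ)) * ((N - 1 - (l : ℕ)).factorial : ℂ)) := by
    refine diagonal_mul_Jmat fun k l hkl => ?_
    obtain ⟨r, hr⟩ : ∃ r, N = l + r + 1 := ⟨N - 1 - l, by omega⟩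
    have hl : N - 1 - (l : ℕ) = r := by omega
    have hl' : N - (l : ℕ) = r + 1 := by omega
    have hk : N - 1 - (k : ℕ) = r + 1 := by omega
    rw [hl, hl', hk, Nat.factorial_succ]
    push_cast
    ring
  have hJ : firstModeNumber N * Jmat N = Jmat N * diagonal fun l : Fin N => ((N - l : ℕ) : ℂ) :=
    diagonal_mul_Jmat fun k l hkl => by rw [hkl, add_comm, Nat.sub_sub]
  rw [hF, hJ, rightFactor, Matrix.mul_assoc, diagonal_mul_diagonal, ← Matrix.mul_smul,
    ← diagonal_smul]
  congr 2
  exact funext fun l => mul_assoc _ _ _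

lemma epHamiltonian_mul_epTransition (N : ℕ) (c : ℂ) :
    epHamiltonian N c * epTransition N c = epTransition N c * Jmat N := by
  calc epHamiltonian N c * epTransition N c
      = c • (leftFactor N c * (integerHamiltonian N * Pmat N) * rightFactor N c) := by
        rw [epTransition, ← Matrix.mul_assoc, ← Matrix.mul_assoc, epHamiltonian_mul_leftFactor]
        simp only [Matrix.smul_mul, Matrix.mul_assoc]
    _ = leftFactor N c * Pmat N *
          (-c • (firstModeNumber N * Jmat N * rightFactor N c)) := by
        rw [integerHamiltonian_mul_Pmat]
        simp [Matrix.mul_assoc]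
    _ = epTransition N c * Jmat N := by
        rw [← rightFactor_mul_Jmat, epTransition, Matrix.mul_assoc _ _ (Jmat N)]

lemma isUnit_Pmat (N : ℕ) : IsUnit (Pmat N) := by
  have h : Pmat N = (of fun m q : Fin N => ((m : ℕ).choose q : ℂ)).submatrix Fin.revPerm id := by
    ext m q
    have hm : N - 1 - (m : ℕ) = N - (m + 1) := by omega
    simp [Pmat, hm]
  rw [isUnit_iff_isUnit_det, h, det_permute, det_of_isLowerTriangular]
  · simp
  · intro i j hij
    rw [of_apply, Nat.choose_eq_zero_of_lt (show (i : ℕ) < j from hij), Nat.cast_zero]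

lemma isUnit_leftFactor (N : ℕ) {c : ℂ} (hc : c ≠ 0) : IsUnit (leftFactor N c) := by
  rw [leftFactor, isUnit_diagonal, Pi.isUnit_iff]
  intro k
  have hk : 0 < (N - 1).choose (k : ℕ) := Nat.choose_pos (by omega)
  exact (mul_ne_zero (pow_ne_zero _ hc) (mod_cast (by positivity))).isUnit

lemma isUnit_rightFactor (N : ℕ) {c : ℂ} (hc : c ≠ 0) : IsUnit (rightFactor N c) := by
  rw [rightFactor, isUnit_diagonal, Pi.isUnit_iff]
  exact fun k =>
    (mul_ne_zero (pow_ne_zero _ (neg_ne_zero.2 hc)) (mod_cast Nat.factorial_ne_zero _)).isUnit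

lemma isUnit_epTransition (N : ℕ) {c : ℂ} (hc : c ≠ 0) : IsUnit (epTransition N c) :=
  ((isUnit_leftFactor N hc).mul (isUnit_Pmat N)).mul (isUnit_rightFactor N hc)

lemma epTransition_inv_mul_epHamiltonian_mul (N : ℕ) {c : ℂ} (hc : c ≠ 0) :
    (epTransition N c)⁻¹ * epHamiltonian N c * epTransition N c = Jmat N := by
  rw [Matrix.mul_assoc, epHamiltonian_mul_epTransition,
    nonsing_inv_mul_cancel_left _ _ ((isUnit_iff_isUnit_det _).1 (isUnit_epTransition N hc))]

lemma QAO_inv_mul_HAOc_zero_mul (N : ℕ) : (QAO N)⁻¹ * HAOc N 0 * QAO N = Jmat N := by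
  rw [HAOc_zero, QAO_eq_epTransition, epTransition_inv_mul_epHamiltonian_mul N one_ne_zero]

lemma QBH_inv_mul_HBH_one_mul (N : ℕ) : (QBH N)⁻¹ * HBH N 1 * QBH N = Jmat N := by
  rw [HBH_one, QBH_eq_epTransition, epTransition_inv_mul_epHamiltonian_mul N Complex.I_ne_zero]

lemma continuous_HAOc (N : ℕ) : Continuous (HAOc N) := by
  rw [funext (HAOc_eq N)]
  fun_prop

lemma continuous_HBH (N : ℕ) : Continuous (HBH N) := by
  rw [funext (HBH_eq N)]
  fun_prop

lemma continuous_Hsys (N : ℕ) : Continuous (Hsys N) := by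
  have hA : Continuous fun t : ℝ => HAOc N (-t) := (continuous_HAOc N).comp continuous_neg
  have hB : Continuous fun t : ℝ => HBH N (1 - (t : ℂ)) :=
    (continuous_HBH N).comp (by fun_prop)
  refine Continuous.if_le (by fun_prop) (by fun_prop) continuous_id continuous_const ?_
  rintro t rfl
  simp [QAO_inv_mul_HAOc_zero_mul, QBH_inv_mul_HBH_one_mul]

/-- the 'Jordan-block match' realization is continuous on all of `ℝ`,
equals `J` at the exceptional-point instant `t = 0`, and both one-sided limits at
`t = 0` equal `J`. -/
theorem jordan_match_continuous (N : ℕ) (hN : 1 ≤ N) :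
    Continuous (Hsys N) ∧ Hsys N 0 = Jmat N ∧
      Filter.Tendsto (Hsys N) (nhdsWithin 0 (Set.Iio 0)) (nhds (Jmat N)) ∧
      Filter.Tendsto (Hsys N) (nhdsWithin 0 (Set.Ioi 0)) (nhds (Jmat N)) := by
  have hzero : Hsys N 0 = Jmat N := by simpa [Hsys] using QAO_inv_mul_HAOc_zero_mul N
  have hlim : Filter.Tendsto (Hsys N) (nhds 0) (nhds (Jmat N)) :=
    hzero ▸ (continuous_Hsys N).tendsto 0
  exact ⟨continuous_Hsys N, hzero, hlim.mono_left nhdsWithin_le_nhds,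
    hlim.mono_left nhdsWithin_le_nhds⟩
end
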